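/- Let p⁺, q⁺, p⁻, q⁻ be real bivariate polynomials of total degree at most 2. If the first-order Melnikov function M is not identically zero on (0,∞), then M has at most 6 zeros in (0,∞), counted with multiplicity (order of vanishing). -/

import Mathlib

/-!
In the coordinate `x = σ h` the Melnikov function is a polynomial. Write `X = √h cos τ = x` and
`Y = √h sin τ = x³`. A quadratic perturbation contributes over each half circle trigonometric
forms of degree `1`, `2` and `3`. Forms of odd degree have antiderivatives that change sign under
`θ ↦ θ + π`, so they give linear and cubic forms in `(X, Y)`; forms of degree `2` are `π`-periodic,
so they give multiples of `h = X² + Y²`. Hence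
`M(h) = a x + b x³ + c (x² + x⁶) + d x⁵ + e x⁷ + f x⁹`,
a polynomial `P` with at most seven monomials, which by Descartes' rule of signs has at most six
positive roots counted with multiplicity (`countP_pos_roots_lt_card_support`).

Multiplicities are preserved because `σ` is, near every positive `h₀`, the analytic local inverse
of `g x = x² + x⁶` (`analyticAt_sigma`): if `M` vanishes to order `m` at `h₀`, then
`P x = M (g x)` vanishes to order `m` at `σ h₀` (`le_rootMultiplicity_of_iteratedDeriv_eq_zero`).
-/

open MeasureTheory intervalIntegral

/-- `τ(h) = arctan(σ(h)²)`, the angle of the intersection point of the circle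
`x² + y² = h` with the switching curve `y = x³`. -/
noncomputable def tau (σ : ℝ → ℝ) (h : ℝ) : ℝ := Real.arctan ((σ h) ^ 2)

/-- `J i j h = h^((i+j+1)/2) ∫_{τ(h)}^{τ(h)+π} cosⁱθ sin^{j+1}θ dθ = ∫_{L_h⁺} xⁱ yʲ dx`. -/
noncomputable def J (σ : ℝ → ℝ) (i j : ℕ) (h : ℝ) : ℝ :=
  h ^ (((i : ℝ) + (j : ℝ) + 1) / 2) *
    ∫ θ in tau σ h..(tau σ h + Real.pi), Real.cos θ ^ i * Real.sin θ ^ (j + 1)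

/-- `I i j h = h^((i+j+1)/2) ∫_{τ(h)-π}^{τ(h)} cosⁱθ sin^{j+1}θ dθ = ∫_{L_h⁻} xⁱ yʲ dx`. -/
noncomputable def I (σ : ℝ → ℝ) (i j : ℕ) (h : ℝ) : ℝ :=
  h ^ (((i : ℝ) + (j : ℝ) + 1) / 2) *
    ∫ θ in (tau σ h - Real.pi)..tau σ h, Real.cos θ ^ i * Real.sin θ ^ (j + 1)

/-- The first-order Melnikov function of the piecewise perturbed linear center with
switching curve `y = x³`, for perturbation polynomials `p⁺, q⁺, p⁻, q⁻`:
`M(h) = √h ∫_{τ(h)}^{τ(h)+π} (q⁺ sin θ + p⁺ cos θ) dθ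
      + √h ∫_{τ(h)-π}^{τ(h)} (q⁻ sin θ + p⁻ cos θ) dθ`,
the polynomials being evaluated at `(√h cos θ, √h sin θ)`. -/
noncomputable def Mel (σ : ℝ → ℝ) (pp qp pm qm : MvPolynomial (Fin 2) ℝ) (h : ℝ) : ℝ :=
  Real.sqrt h *
      (∫ θ in tau σ h..(tau σ h + Real.pi),
        MvPolynomial.eval ![Real.sqrt h * Real.cos θ, Real.sqrt h * Real.sin θ] qp *
            Real.sin θ +
          MvPolynomial.eval ![Real.sqrt h * Real.cos θ, Real.sqrt h * Real.sin θ] pp *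
            Real.cos θ) +
    Real.sqrt h *
      (∫ θ in (tau σ h - Real.pi)..tau σ h,
        MvPolynomial.eval ![Real.sqrt h * Real.cos θ, Real.sqrt h * Real.sin θ] qm *
            Real.sin θ +
          MvPolynomial.eval ![Real.sqrt h * Real.cos θ, Real.sqrt h * Real.sin θ] pm *
            Real.cos θ)

/-! ### Melnikov function as a polynomial in `σ h` -/

lemma exists_coeffs_of_totalDegree_le_two (p : MvPolynomial (Fin 2) ℝ) (hp : p.totalDegree ≤ 2) :
    ∃ a b c d e f : ℝ, ∀ x y : ℝ, MvPolynomial.eval ![x, y] p =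
      a + b * x + c * y + d * x ^ 2 + e * (x * y) + f * y ^ 2 := by
  have key : ∀ s ⊆ p.support, ∃ a b c d e f : ℝ, ∀ x y : ℝ,
      ∑ n ∈ s, p.coeff n * (x ^ n 0 * y ^ n 1) =
        a + b * x + c * y + d * x ^ 2 + e * (x * y) + f * y ^ 2 := by
    intro s
    induction s using Finset.induction_on with
    | empty => intro _; exact ⟨0, 0, 0, 0, 0, 0, fun x y => by simp⟩
    | insert n s hn ih =>
      intro hs
      obtain ⟨a, b, c, d, e, f, h⟩ := ih fun z hz => hs (Finset.mem_insert_of_mem hz)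
      have hd : n 0 + n 1 ≤ 2 := by
        have := (MvPolynomial.le_totalDegree (hs (Finset.mem_insert_self n s))).trans hp
        simpa [Finsupp.sum_fintype] using this
      simp only [Finset.sum_insert hn, h]
      generalize p.coeff n = k
      generalize n 0 = i at hd ⊢
      generalize n 1 = j at hd ⊢
      have hi : i ≤ 2 := by omega
      have hj : j ≤ 2 := by omega
      interval_cases i <;> interval_cases j <;> first
        | omega
        | exact ⟨a + k, b, c, d, e, f, fun x y => by ring1⟩
        | exact ⟨a, b + k, c, d, e, f, fun x y => by ring1⟩
        | exact ⟨a, b, c + k, d, e, f, fun x y => by ring1⟩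
        | exact ⟨a, b, c, d + k, e, f, fun x y => by ring1⟩
        | exact ⟨a, b, c, d, e + k, f, fun x y => by ring1⟩
        | exact ⟨a, b, c, d, e, f + k, fun x y => by ring1⟩
  obtain ⟨a, b, c, d, e, f, h⟩ := key p.support subset_rfl
  refine ⟨a, b, c, d, e, f, fun x y => ?_⟩
  rw [← h, MvPolynomial.eval_eq']
  simp

/-- The contribution of one half circle, starting at the point `(r cos a, r sin a)`: a linear form,
a multiple of `r²` and a cubic form in that point. -/
lemma exists_half_integral (p q : MvPolynomial (Fin 2) ℝ)
    (hp : p.totalDegree ≤ 2) (hq : q.totalDegree ≤ 2) :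
    ∃ A B C D E F G : ℝ, ∀ r a : ℝ,
      r * (∫ θ in a..(a + Real.pi),
        MvPolynomial.eval ![r * Real.cos θ, r * Real.sin θ] q * Real.sin θ +
          MvPolynomial.eval ![r * Real.cos θ, r * Real.sin θ] p * Real.cos θ) =
      A * (r * Real.cos a) + B * (r * Real.sin a) + C * r ^ 2 +
        D * (r * Real.cos a) ^ 3 + E * ((r * Real.cos a) ^ 2 * (r * Real.sin a)) +
        F * ((r * Real.cos a) * (r * Real.sin a) ^ 2) + G * (r * Real.sin a) ^ 3 := by
  obtain ⟨p0, p1, p2, p3, p4, p5, hp⟩ := exists_coeffs_of_totalDegree_le_two p hp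
  obtain ⟨q0, q1, q2, q3, q4, q5, hq⟩ := exists_coeffs_of_totalDegree_le_two q hq
  refine ⟨2 * q0, -2 * p0, (q2 + p1) * Real.pi / 2,
    2 / 3 * q3 + 4 / 3 * q5 + 2 / 3 * p4, -2 * p3, 2 * q5,
    -2 / 3 * q4 - 4 / 3 * p3 - 2 / 3 * p5, fun r a => ?_⟩
  have hF : ∀ θ : ℝ, HasDerivAt (fun θ : ℝ =>
      -q0 * Real.cos θ + q1 * r * Real.sin θ ^ 2 / 2
        + q2 * r * (θ - Real.sin θ * Real.cos θ) / 2
        - q3 * r ^ 2 * Real.cos θ ^ 3 / 3 + q4 * r ^ 2 * Real.sin θ ^ 3 / 3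
        + q5 * r ^ 2 * (-Real.cos θ + Real.cos θ ^ 3 / 3)
        + p0 * Real.sin θ + p1 * r * (θ + Real.sin θ * Real.cos θ) / 2
        + p2 * r * Real.sin θ ^ 2 / 2 + p3 * r ^ 2 * (Real.sin θ - Real.sin θ ^ 3 / 3)
        - p4 * r ^ 2 * Real.cos θ ^ 3 / 3 + p5 * r ^ 2 * Real.sin θ ^ 3 / 3)
      (MvPolynomial.eval ![r * Real.cos θ, r * Real.sin θ] q * Real.sin θ +
          MvPolynomial.eval ![r * Real.cos θ, r * Real.sin θ] p * Real.cos θ) θ := by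
    intro θ
    have hs := Real.hasDerivAt_sin θ
    have hc := Real.hasDerivAt_cos θ
    have hi := hasDerivAt_id θ
    have h1 : Real.cos θ ^ 2 = 1 - Real.sin θ ^ 2 := by
      linarith [Real.sin_sq_add_cos_sq θ]
    have h2 : Real.cos θ ^ 3 = Real.cos θ * (1 - Real.sin θ ^ 2) := by rw [← h1]; ring
    rw [hp, hq]
    have := ((((((((((((hc.const_mul (-q0)).add (((hs.pow 2).const_mul (q1 * r)).div_const 2)).add
      (((hi.sub (hs.mul hc)).const_mul (q2 * r)).div_const 2)).sub
      (((hc.pow 3).const_mul (q3 * r ^ 2)).div_const 3)).add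
      (((hs.pow 3).const_mul (q4 * r ^ 2)).div_const 3)).add
      ((hc.neg.add ((hc.pow 3).div_const 3)).const_mul (q5 * r ^ 2))).add
      (hs.const_mul p0)).add
      (((hi.add (hs.mul hc)).const_mul (p1 * r)).div_const 2)).add
      (((hs.pow 2).const_mul (p2 * r)).div_const 2)).add
      ((hs.sub ((hs.pow 3).div_const 3)).const_mul (p3 * r ^ 2))).sub
      (((hc.pow 3).const_mul (p4 * r ^ 2)).div_const 3)).add
      (((hs.pow 3).const_mul (p5 * r ^ 2)).div_const 3))
    refine this.congr_deriv ?_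
    push_cast
    ring_nf
    simp only [h1, h2]
    ring
  rw [integral_eq_sub_of_hasDerivAt (fun θ _ => hF θ)]
  · simp only [Real.sin_add_pi, Real.cos_add_pi]
    have h1 : Real.cos a ^ 2 = 1 - Real.sin a ^ 2 := by
      linarith [Real.sin_sq_add_cos_sq a]
    have h2 : Real.cos a ^ 3 = Real.cos a * (1 - Real.sin a ^ 2) := by rw [← h1]; ring
    ring_nf
    simp only [h1, h2]
    ring
  · apply Continuous.intervalIntegrable
    simp only [hp, hq]
    fun_prop

lemma sqrt_mul_cos_sin_tau {σ : ℝ → ℝ} {h : ℝ} (hpos : 0 < σ h) (heq : σ h ^ 2 + σ h ^ 6 = h) :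
    √h * Real.cos (tau σ h) = σ h ∧ √h * Real.sin (tau σ h) = σ h ^ 3 := by
  have hs : √h = σ h * √(1 + (σ h ^ 2) ^ 2) := by
    have h1 : h = σ h ^ 2 * (1 + (σ h ^ 2) ^ 2) := by linear_combination -heq
    have h2 : √h = √(σ h ^ 2 * (1 + (σ h ^ 2) ^ 2)) := congrArg _ h1
    rw [h2, Real.sqrt_mul (by positivity), Real.sqrt_sq hpos.le]
  have hne : √(1 + (σ h ^ 2) ^ 2) ≠ 0 := by positivity
  unfold tau
  rw [Real.cos_arctan, Real.sin_arctan, hs]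
  constructor <;> field_simp

open Polynomial in
/-- In the coordinate `x = σ h` the Melnikov function is a polynomial with at most seven
monomials, of degrees `1, 2, 3, 5, 6, 7, 9`. -/
lemma exists_polynomial_Mel (pp qp pm qm : MvPolynomial (Fin 2) ℝ)
    (hpp : pp.totalDegree ≤ 2) (hqp : qp.totalDegree ≤ 2)
    (hpm : pm.totalDegree ≤ 2) (hqm : qm.totalDegree ≤ 2) :
    ∃ P : ℝ[X], P.support.card ≤ 7 ∧ ∀ (σ : ℝ → ℝ) (h : ℝ), 0 < σ h → σ h ^ 2 + σ h ^ 6 = h →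
      Mel σ pp qp pm qm h = P.eval (σ h) := by
  obtain ⟨A, B, C, D, E, F, G, hplus⟩ := exists_half_integral pp qp hpp hqp
  obtain ⟨A', B', C', D', E', F', G', hminus⟩ := exists_half_integral pm qm hpm hqm
  refine ⟨monomial 1 (A - A') + monomial 2 (C + C') + monomial 3 (B - B' + D - D')
    + monomial 5 (E - E') + monomial 6 (C + C') + monomial 7 (F - F') + monomial 9 (G - G'),
    ?_, fun σ h hpos heq => ?_⟩
  · refine (Finset.card_le_card (t := {1, 2, 3, 5, 6, 7, 9}) fun n hn => ?_).trans (by decide)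
    contrapose! hn
    simp only [Finset.mem_insert, Finset.mem_singleton, not_or] at hn
    obtain ⟨h1, h2, h3, h5, h6, h7, h9⟩ := hn
    simp [coeff_monomial, Ne.symm h1, Ne.symm h2, Ne.symm h3, Ne.symm h5, Ne.symm h6, Ne.symm h7,
      Ne.symm h9]
  · obtain ⟨hc, hs⟩ := sqrt_mul_cos_sin_tau hpos heq
    have hr : √h ^ 2 = σ h ^ 2 + σ h ^ 6 := by
      rw [Real.sq_sqrt (by rw [← heq]; positivity), heq]
    -- The lower half circle starts at `τ - π`, the antipode of the intersection point.
    have hm := hminus (√h) (tau σ h - Real.pi)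
    rw [sub_add_cancel, Real.cos_sub_pi, Real.sin_sub_pi, mul_neg (√h), mul_neg (√h), hc, hs,
      hr] at hm
    have hpl := hplus (√h) (tau σ h)
    rw [hc, hs, hr] at hpl
    rw [Mel, hpl, hm]
    simp only [eval_add, eval_monomial]
    ring

/-! ### Descartes' bound in terms of the number of monomials -/

open Polynomial in
lemma signVariations_lt_card_support (P : ℝ[X]) (hP : P ≠ 0) :
    P.signVariations < P.support.card := by
  induction hn : P.support.card using Nat.strong_induction_on generalizing P with
  | _ n ih =>
    have hcard := card_support_eraseLead_add_one hP
    by_cases h0 : P.eraseLead = 0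
    · have hmon := P.eraseLead_add_monomial_natDegree_leadingCoeff
      rw [h0, zero_add] at hmon
      rw [← hmon, signVariations_monomial]
      omega
    · have := ih _ (by omega) P.eraseLead h0 rfl
      have := signVariations_le_eraseLead_succ P
      omega

open Polynomial in
lemma countP_pos_roots_lt_card_support (P : ℝ[X]) (hP : P ≠ 0) :
    P.roots.countP (0 < ·) < P.support.card :=
  (roots_countP_pos_le_signVariations P).trans_lt (signVariations_lt_card_support P hP)

open Polynomial in
lemma sum_rootMultiplicity_le_countP (P : ℝ[X]) (T : Finset ℝ) (hT : ∀ x ∈ T, 0 < x) :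
    ∑ x ∈ T, P.rootMultiplicity x ≤ P.roots.countP (0 < ·) := by
  classical
  rw [Multiset.countP_eq_card_filter]
  calc ∑ x ∈ T, P.rootMultiplicity x
      = ∑ x ∈ T, (P.roots.filter (0 < ·)).count x := by
        refine Finset.sum_congr rfl fun x hx => ?_
        rw [Multiset.count_filter_of_pos (hT x hx), count_roots]
    _ ≤ (P.roots.filter (0 < ·)).card := by
        rw [← Multiset.toFinset_sum_count_eq]
        refine Finset.sum_le_sum_of_ne_zero fun x _ hx => ?_
        rw [Multiset.mem_toFinset]
        exact Multiset.count_ne_zero.mp hx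

/-! ### Multiplicities under the change of variable -/

lemma analyticAt_sigma (σ : ℝ → ℝ) (hσ : ∀ h : ℝ, 0 < h → 0 < σ h ∧ (σ h) ^ 2 + (σ h) ^ 6 = h)
    {h₀ : ℝ} (h₀pos : 0 < h₀) : AnalyticAt ℝ σ h₀ := by
  obtain ⟨hpos, heq⟩ := hσ h₀ h₀pos
  set g : ℝ → ℝ := fun x => x ^ 2 + x ^ 6 with hg
  have hcd : ContDiffAt ℝ ⊤ g (σ h₀) := by
    rw [hg]; fun_prop
  have hder : HasDerivAt g (2 * σ h₀ + 6 * σ h₀ ^ 5) (σ h₀) := by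
    refine ((hasDerivAt_pow 2 (σ h₀)).add (hasDerivAt_pow 6 (σ h₀))).congr_deriv ?_
    norm_num
  have hne : 2 * σ h₀ + 6 * σ h₀ ^ 5 ≠ 0 := by positivity
  have hfd := hder.hasFDerivAt_equiv hne
  have hinv := (hcd.to_localInverse hfd (by simp)).analyticAt
  have hinj : Set.InjOn g (Set.Ioi 0) := by
    apply StrictMonoOn.injOn
    intro x hx y hy hxy
    have hx' : 0 ≤ x := le_of_lt hx
    have h1 := pow_lt_pow_left₀ hxy hx' (n := 2) (by norm_num)
    have h2 := pow_lt_pow_left₀ hxy hx' (n := 6) (by norm_num)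
    simp only [hg]
    linarith
  have hleft : ∀ᶠ x in nhds (σ h₀), σ (g x) = x := by
    filter_upwards [lt_mem_nhds hpos] with x hx
    have hgx : 0 < g x := by simp only [hg]; positivity
    exact hinj (hσ _ hgx).1 hx (hσ _ hgx).2
  have hEq := (hcd.hasStrictFDerivAt' hfd (by simp)).localInverse_unique hleft
  have hval : g (σ h₀) = h₀ := heq
  rw [hval] at hEq hinv
  exact hinv.congr (Filter.EventuallyEq.symm hEq)

open Polynomial in
/-- The order of vanishing at `x₀` of a polynomial, seen as an analytic function, is bounded by
its root multiplicity. -/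
lemma le_rootMultiplicity_of_eventually_eq (P : ℝ[X]) (hP : P ≠ 0) {x₀ : ℝ} {n : ℕ} {G : ℝ → ℝ}
    (hG : AnalyticAt ℝ G x₀) (h : ∀ᶠ x in nhds x₀, P.eval x = (x - x₀) ^ n * G x) :
    n ≤ P.rootMultiplicity x₀ := by
  obtain ⟨Q, hQ, hdvd⟩ := P.exists_eq_pow_rootMultiplicity_mul_and_not_dvd hP x₀
  have hQ0 : Q.eval x₀ ≠ 0 := fun h0 => hdvd (dvd_iff_isRoot.mpr h0)
  have hQa : AnalyticAt ℝ (fun x => Q.eval x) x₀ := AnalyticOnNhd.eval_polynomial Q x₀ trivial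
  have hPa : AnalyticAt ℝ (fun x => P.eval x) x₀ := AnalyticOnNhd.eval_polynomial P x₀ trivial
  have hord : analyticOrderAt (fun x => P.eval x) x₀ = P.rootMultiplicity x₀ := by
    rw [hPa.analyticOrderAt_eq_natCast]
    refine ⟨_, hQa, hQ0, Filter.Eventually.of_forall fun x => ?_⟩
    conv_lhs => rw [hQ]
    simp
  have hle : (n : ℕ∞) ≤ analyticOrderAt (fun x => P.eval x) x₀ :=
    (natCast_le_analyticOrderAt hPa).mpr ⟨G, hG, by simpa using h⟩
  rw [hord] at hle
  exact_mod_cast hle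

open Polynomial in
/-- A zero of order `n` of `P ∘ σ` at `h₀` gives a root of `P` of multiplicity at least `n` at
`σ h₀`. -/
lemma le_rootMultiplicity_of_iteratedDeriv_eq_zero (σ : ℝ → ℝ)
    (hσ : ∀ h : ℝ, 0 < h → 0 < σ h ∧ (σ h) ^ 2 + (σ h) ^ 6 = h) (P : ℝ[X]) (hP : P ≠ 0)
    (M : ℝ → ℝ) (hM : ∀ h, 0 < h → M h = P.eval (σ h)) {h₀ : ℝ} (h₀pos : 0 < h₀) {n : ℕ}
    (hn : ∀ k < n, iteratedDeriv k M h₀ = 0) : n ≤ P.rootMultiplicity (σ h₀) := by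
  obtain ⟨hpos, heq⟩ := hσ h₀ h₀pos
  have hMa : AnalyticAt ℝ M h₀ := by
    have h1 : AnalyticAt ℝ (fun h => P.eval (σ h)) h₀ :=
      (AnalyticOnNhd.eval_polynomial P (σ h₀) trivial).comp (analyticAt_sigma σ hσ h₀pos)
    refine h1.congr ?_
    filter_upwards [lt_mem_nhds h₀pos] with h hh using (hM h hh).symm
  obtain ⟨G, hG, hfac⟩ := (natCast_le_analyticOrderAt hMa).mp
    ((natCast_le_analyticOrderAt_iff_iteratedDeriv_eq_zero hMa).mpr hn)
  set g : ℝ → ℝ := fun x => x ^ 2 + x ^ 6 with hg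
  have hga : AnalyticAt ℝ g (σ h₀) := by rw [hg]; fun_prop
  have hgval : g (σ h₀) = h₀ := heq
  -- `K` is the polynomial quotient `(g x - g y) / (x - y)` at `y = σ h₀`.
  set y := σ h₀
  set K : ℝ → ℝ := fun x =>
    (x + y) * (1 + x ^ 4 + x ^ 2 * y ^ 2 + y ^ 4) with hK
  have hKa : AnalyticAt ℝ K y := by rw [hK]; fun_prop
  have hGg : AnalyticAt ℝ (fun x => G (g x)) y :=
    AnalyticAt.comp (g := G) (f := g) (by rwa [hgval]) hga
  refine le_rootMultiplicity_of_eventually_eq P hP (G := fun x => K x ^ n * G (g x))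
    ((hKa.pow n).mul hGg) ?_
  have hcont : Filter.Tendsto g (nhds y) (nhds h₀) := by
    simpa only [hgval] using hga.continuousAt.tendsto
  filter_upwards [hcont.eventually hfac, lt_mem_nhds hpos] with x hx hxpos
  have hgx : 0 < g x := by simp only [hg]; positivity
  have hsig : σ (g x) = x := by
    obtain ⟨hs, hs'⟩ := hσ _ hgx
    have hs'' : σ (g x) ^ 2 + σ (g x) ^ 6 = x ^ 2 + x ^ 6 := hs'
    rcases lt_trichotomy (σ (g x)) x with hlt | heq' | hgt
    · have h1 := pow_lt_pow_left₀ hlt hs.le (n := 2) (by norm_num)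
      have h2 := pow_lt_pow_left₀ hlt hs.le (n := 6) (by norm_num)
      linarith
    · exact heq'
    · have h1 := pow_lt_pow_left₀ hgt hxpos.le (n := 2) (by norm_num)
      have h2 := pow_lt_pow_left₀ hgt hxpos.le (n := 6) (by norm_num)
      linarith
  rw [hM _ hgx, hsig, smul_eq_mul] at hx
  have hdiff : g x - h₀ = (x - y) * K x := by
    rw [← hgval]; simp only [hg, hK]; ring
  rw [hx, hdiff, mul_pow, mul_assoc]

/-! ### Zero count -/

/-- For degree-2 perturbations, a not-identically-zero first-order Melnikov function
has at most 6 zeros on `(0,∞)` counted with multiplicity (order of vanishing). -/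
theorem Mel_zero_count_deg_two (σ : ℝ → ℝ)
    (hσ : ∀ h : ℝ, 0 < h → 0 < σ h ∧ (σ h) ^ 2 + (σ h) ^ 6 = h)
    (pp qp pm qm : MvPolynomial (Fin 2) ℝ)
    (hpp : pp.totalDegree ≤ 2) (hqp : qp.totalDegree ≤ 2)
    (hpm : pm.totalDegree ≤ 2) (hqm : qm.totalDegree ≤ 2)
    (hM : ∃ h : ℝ, 0 < h ∧ Mel σ pp qp pm qm h ≠ 0)
    (S : Finset ℝ) (hS : ∀ h₀ ∈ S, 0 < h₀) (m : ℝ → ℕ)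
    (hmul : ∀ h₀ ∈ S, ∀ k < m h₀, iteratedDeriv k (Mel σ pp qp pm qm) h₀ = 0) :
    ∑ h₀ ∈ S, m h₀ ≤ 6 := by
  obtain ⟨P, hcard, hP⟩ := exists_polynomial_Mel pp qp pm qm hpp hqp hpm hqm
  have hMP : ∀ h, 0 < h → Mel σ pp qp pm qm h = P.eval (σ h) :=
    fun h hh => hP σ h (hσ h hh).1 (hσ h hh).2
  clear hP
  generalize Mel σ pp qp pm qm = M at hMP hM hmul
  have hP0 : P ≠ 0 := by
    rintro rfl
    obtain ⟨h, hh, hne⟩ := hM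
    exact hne (by simpa using hMP h hh)
  have hinj : Set.InjOn σ S := by
    intro a ha b hb hab
    rw [← (hσ a (hS a ha)).2, ← (hσ b (hS b hb)).2, hab]
  have hlt := countP_pos_roots_lt_card_support P hP0
  have h1 : ∑ h₀ ∈ S, m h₀ ≤ ∑ h₀ ∈ S, P.rootMultiplicity (σ h₀) :=
    Finset.sum_le_sum fun h₀ hh =>
      le_rootMultiplicity_of_iteratedDeriv_eq_zero σ hσ P hP0 M hMP (hS h₀ hh) (hmul h₀ hh)
  have h2 : ∑ x ∈ S.image σ, P.rootMultiplicity x = ∑ h₀ ∈ S, P.rootMultiplicity (σ h₀) :=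
    Finset.sum_image hinj
  have h3 := sum_rootMultiplicity_le_countP P (S.image σ) fun x hx => by
    obtain ⟨h, hh, rfl⟩ := Finset.mem_image.mp hx
    exact (hσ h (hS h hh)).1
  rw [h2] at h3
  exact Nat.le_of_lt_succ (((h1.trans h3).trans_lt hlt).trans_le hcard)
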